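/- arXiv:2401.01061 — 5 statements merged into one kernel-verified Lean document; each statement's English description precedes it below -/
import Mathlib

section
/- Let X be a complex Banach space and T ∈ L(X). The following are equivalent: (i) there exists P ∈ L(X) with P² − P compact and PT − TP compact, and there exists U ∈ L(X) with UP − PU compact and U(T + P) − I compact (i.e. the image of T in the Calkin algebra is left p-invertible for the idempotent p = Π(P)); (ii) there exists S ∈ L(X) such that STS − S, S²T − S and TST − ST² are all compact, and there exists V ∈ L(X) such that the commutator VST − STV and V(I + T − ST) − I are compact. Moreover, when (ii) holds, the operator P in (i) may be chosen so that P − (I − ST) is compact. -/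
/-!
Every condition is an identity in the quotient of `L(X)` by the compact operators, so the theorem is
a statement about rings. If `p` is an idempotent commuting with `t` and `u`, and `u * (t + p) = 1`,
then multiplying on the right by `1 - p` gives `u * (1 - p) * t = 1 - p`; thus `s = u * (1 - p)`
satisfies `s * t = 1 - p`, from which all the identities for `s` follow. Conversely `p = 1 - s * t`
is an idempotent with the required properties, with the same left inverse `u = v`.
-/

section Ring

variable {R : Type*} [Ring R] {p s t u v : R}

/-- `u` witnesses that `t` is left `p`-invertible: `p` is an idempotent commuting with both `t` and
`u`, and `u` is a left inverse of `t + p`. -/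
structure IsLeftPInverse (p t u : R) : Prop where
  isIdempotentElem : IsIdempotentElem p
  commute_left : Commute p t
  commute_right : Commute u p
  mul_add_eq_one : u * (t + p) = 1

theorem isLeftPInverse_one_sub_mul (h_outer : s * t * s = s) (h_comm : t * s * t = s * t * t)
    (hv : Commute v (s * t)) (hv_inv : v * (1 + t - s * t) = 1) :
    IsLeftPInverse (1 - s * t) t v where
  isIdempotentElem := by
    have h_idem : IsIdempotentElem (s * t) := by
      rw [IsIdempotentElem, ← mul_assoc, h_outer]
    exact h_idem.one_sub
  commute_left := by
    have h_st : Commute (s * t) t := by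
      rw [Commute, SemiconjBy, ← mul_assoc, h_comm]
    exact (Commute.one_left t).sub_left h_st
  commute_right := (Commute.one_right v).sub_right hv
  mul_add_eq_one := by rwa [← add_sub_assoc, add_comm t]

namespace IsLeftPInverse

theorem mul_one_sub_mul (h : IsLeftPInverse p t u) : u * (1 - p) * t = 1 - p := by
  have h_comm : Commute (1 - p) t := (Commute.one_left t).sub_left h.commute_left
  calc
    u * (1 - p) * t = u * (t * (1 - p)) := by rw [mul_assoc, h_comm.eq]
    _ = u * (t + p) * (1 - p) := by
      rw [mul_assoc, add_mul, h.isIdempotentElem.mul_one_sub_self, add_zero]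
    _ = 1 - p := by rw [h.mul_add_eq_one, one_mul]

theorem commute_one_sub (h : IsLeftPInverse p t u) : Commute u (1 - p) :=
  (Commute.one_right u).sub_right h.commute_right

theorem mul_one_sub_mul_mul_self (h : IsLeftPInverse p t u) :
    u * (1 - p) * t * (u * (1 - p)) = u * (1 - p) := by
  rw [h.mul_one_sub_mul, h.commute_one_sub.eq, ← mul_assoc, h.isIdempotentElem.one_sub.eq]

theorem mul_one_sub_mul_self_mul (h : IsLeftPInverse p t u) :
    u * (1 - p) * (u * (1 - p)) * t = u * (1 - p) := by
  rw [mul_assoc, h.mul_one_sub_mul, mul_assoc, h.isIdempotentElem.one_sub.eq]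

theorem mul_mul_one_sub_mul (h : IsLeftPInverse p t u) :
    t * (u * (1 - p)) * t = u * (1 - p) * t * t := by
  rw [mul_assoc, h.mul_one_sub_mul]
  exact (Commute.one_right t).sub_right h.commute_left.symm

theorem commute_mul_one_sub_mul (h : IsLeftPInverse p t u) : Commute u (u * (1 - p) * t) := by
  rw [h.mul_one_sub_mul]
  exact h.commute_one_sub

theorem mul_one_add_sub_eq_one (h : IsLeftPInverse p t u) :
    u * (1 + t - u * (1 - p) * t) = 1 := by
  rw [h.mul_one_sub_mul, add_sub_sub_cancel, h.mul_add_eq_one]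

end IsLeftPInverse

end Ring

section Quotient

variable {R : Type*} [Ring R] {I : TwoSidedIdeal R}

theorem sub_mem_iff_ringCon_mk'_eq {a b : R} :
    a - b ∈ I ↔ I.ringCon.mk' a = I.ringCon.mk' b :=
  (I.rel_iff a b).symm.trans (RingCon.eq I.ringCon).symm

theorem isLeftPInverse_ringCon_mk'_iff {p t u : R} :
    IsLeftPInverse (I.ringCon.mk' p) (I.ringCon.mk' t) (I.ringCon.mk' u) ↔
      p * p - p ∈ I ∧ p * t - t * p ∈ I ∧ u * p - p * u ∈ I ∧ u * (t + p) - 1 ∈ I := by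
  simp only [sub_mem_iff_ringCon_mk'_eq, map_mul, map_add, map_one]
  exact ⟨fun ⟨h_idem, h_pt, h_up, h_inv⟩ ↦ ⟨h_idem, h_pt, h_up, h_inv⟩,
    fun ⟨h_idem, h_pt, h_up, h_inv⟩ ↦ ⟨h_idem, h_pt, h_up, h_inv⟩⟩

theorem sub_mem_of_isLeftPInverse_ringCon_mk' {p t u : R}
    (h : IsLeftPInverse (I.ringCon.mk' p) (I.ringCon.mk' t) (I.ringCon.mk' u)) :
    u * (1 - p) * t * (u * (1 - p)) - u * (1 - p) ∈ I ∧
      u * (1 - p) * (u * (1 - p)) * t - u * (1 - p) ∈ I ∧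
      t * (u * (1 - p)) * t - u * (1 - p) * t * t ∈ I ∧
      u * (u * (1 - p) * t) - u * (1 - p) * t * u ∈ I ∧
      u * (1 + t - u * (1 - p) * t) - 1 ∈ I := by
  simp only [sub_mem_iff_ringCon_mk'_eq, map_mul, map_add, map_sub, map_one]
  exact ⟨h.mul_one_sub_mul_mul_self, h.mul_one_sub_mul_self_mul, h.mul_mul_one_sub_mul,
    h.commute_mul_one_sub_mul, h.mul_one_add_sub_eq_one⟩

theorem isLeftPInverse_ringCon_mk'_one_sub_mul {s t v : R} (h_outer : s * t * s - s ∈ I)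
    (h_comm : t * s * t - s * t * t ∈ I) (hv : v * (s * t) - s * t * v ∈ I)
    (hv_inv : v * (1 + t - s * t) - 1 ∈ I) :
    IsLeftPInverse (I.ringCon.mk' (1 - s * t)) (I.ringCon.mk' t) (I.ringCon.mk' v) := by
  simp only [sub_mem_iff_ringCon_mk'_eq, map_mul, map_add, map_sub, map_one]
    at h_outer h_comm hv hv_inv ⊢
  exact isLeftPInverse_one_sub_mul h_outer h_comm hv hv_inv

variable (I) in
theorem left_semi_P_Fredholm_characterization_general (t : R) :
    ((∃ p : R, p * p - p ∈ I ∧ p * t - t * p ∈ I ∧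
        ∃ u : R, u * p - p * u ∈ I ∧ u * (t + p) - 1 ∈ I) ↔
      (∃ s : R, s * t * s - s ∈ I ∧ s * s * t - s ∈ I ∧ t * s * t - s * t * t ∈ I ∧
        ∃ v : R, v * (s * t) - s * t * v ∈ I ∧ v * (1 + t - s * t) - 1 ∈ I)) ∧
    (∀ s : R, s * t * s - s ∈ I → t * s * t - s * t * t ∈ I →
      (∃ v : R, v * (s * t) - s * t * v ∈ I ∧ v * (1 + t - s * t) - 1 ∈ I) →
      ∃ p : R, p - (1 - s * t) ∈ I ∧ p * p - p ∈ I ∧ p * t - t * p ∈ I ∧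
        ∃ u : R, u * p - p * u ∈ I ∧ u * (t + p) - 1 ∈ I) := by
  have exists_idempotent (s : R) (h_outer : s * t * s - s ∈ I)
      (h_comm : t * s * t - s * t * t ∈ I) :
      (∃ v : R, v * (s * t) - s * t * v ∈ I ∧ v * (1 + t - s * t) - 1 ∈ I) →
      ∃ p : R, p - (1 - s * t) ∈ I ∧ p * p - p ∈ I ∧ p * t - t * p ∈ I ∧
        ∃ u : R, u * p - p * u ∈ I ∧ u * (t + p) - 1 ∈ I := by
    rintro ⟨v, hv, hv_inv⟩
    obtain ⟨h_idem, h_pt, h_vp, h_inv⟩ := isLeftPInverse_ringCon_mk'_iff.1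
      (isLeftPInverse_ringCon_mk'_one_sub_mul h_outer h_comm hv hv_inv)
    exact ⟨1 - s * t, by simp only [sub_self, I.zero_mem], h_idem, h_pt, v, h_vp, h_inv⟩
  refine ⟨⟨?_, ?_⟩, exists_idempotent⟩
  · rintro ⟨p, h_idem, h_pt, u, h_up, h_inv⟩
    obtain ⟨h_outer, h_sst, h_comm, hv, hv_inv⟩ := sub_mem_of_isLeftPInverse_ringCon_mk'
      (isLeftPInverse_ringCon_mk'_iff.2 ⟨h_idem, h_pt, h_up, h_inv⟩)
    exact ⟨u * (1 - p), h_outer, h_sst, h_comm, u, hv, hv_inv⟩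
  · rintro ⟨s, h_outer, -, h_comm, hv⟩
    obtain ⟨p, -, hp⟩ := exists_idempotent s h_outer h_comm hv
    exact ⟨p, hp⟩

end Quotient

section CompactOperators

variable (𝕜 X : Type*) [Ring 𝕜] [TopologicalSpace X] [AddCommGroup X] [IsTopologicalAddGroup X]
  [Module 𝕜 X]

/-- The two-sided ideal of compact operators, whose quotient is the Calkin algebra. It has the
same elements as Mathlib's submodule `compactOperator`, bundled so that the quotient is a ring. -/
def compactOperatorIdeal : TwoSidedIdeal (X →L[𝕜] X) :=
  .mk' {A | IsCompactOperator A} isCompactOperator_zero (fun hA hB ↦ hA.add hB) (fun hA ↦ hA.neg)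
    (fun {A _} hB ↦ hB.clm_comp A) (fun {_ B} hA ↦ hA.comp_clm B)

variable {𝕜 X}

theorem mem_compactOperatorIdeal {A : X →L[𝕜] X} :
    A ∈ compactOperatorIdeal 𝕜 X ↔ IsCompactOperator A :=
  TwoSidedIdeal.mem_mk' ..

end CompactOperators

/-- **Left semi-P-Fredholm operators.**
`T ∈ L(X)` is left semi-`P`-Fredholm for some idempotent `p = Π(P)` of the Calkin algebra
(i.e. `Π(T)` is left `p`-invertible) if and only if there exists `S ∈ L(X)` such that
`STS − S`, `S²T − S`, `TST − ST²` are compact and there exists `V ∈ L(X)` with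
`[V, ST]` and `V(I + T − ST) − I` compact.  Moreover, in that case `P` can be chosen
with `P − (I − ST)` compact. -/
theorem left_semi_P_Fredholm_characterization
    {X : Type*} [NormedAddCommGroup X] [NormedSpace ℂ X] [CompleteSpace X]
    (T : X →L[ℂ] X) :
    ((∃ P : X →L[ℂ] X, IsCompactOperator ⇑(P * P - P) ∧ IsCompactOperator ⇑(P * T - T * P) ∧
        ∃ U : X →L[ℂ] X, IsCompactOperator ⇑(U * P - P * U) ∧
          IsCompactOperator ⇑(U * (T + P) - 1)) ↔
      (∃ S : X →L[ℂ] X, IsCompactOperator ⇑(S * T * S - S) ∧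
        IsCompactOperator ⇑(S * S * T - S) ∧ IsCompactOperator ⇑(T * S * T - S * T * T) ∧
        ∃ V : X →L[ℂ] X, IsCompactOperator ⇑(V * (S * T) - (S * T) * V) ∧
          IsCompactOperator ⇑(V * (1 + T - S * T) - 1))) ∧
    (∀ S : X →L[ℂ] X, IsCompactOperator ⇑(S * T * S - S) →
      IsCompactOperator ⇑(S * S * T - S) → IsCompactOperator ⇑(T * S * T - S * T * T) →
      (∃ V : X →L[ℂ] X, IsCompactOperator ⇑(V * (S * T) - (S * T) * V) ∧
        IsCompactOperator ⇑(V * (1 + T - S * T) - 1)) →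
      ∃ P : X →L[ℂ] X, IsCompactOperator ⇑(P - (1 - S * T)) ∧
        IsCompactOperator ⇑(P * P - P) ∧ IsCompactOperator ⇑(P * T - T * P) ∧
        ∃ U : X →L[ℂ] X, IsCompactOperator ⇑(U * P - P * U) ∧
          IsCompactOperator ⇑(U * (T + P) - 1)) := by
  simp only [← mem_compactOperatorIdeal]
  exact (left_semi_P_Fredholm_characterization_general _ T).imp_right
    fun h S h_outer _ h_comm ↦ h S h_outer h_comm
end

section
/- Let A be a complex unital Banach algebra with unit e and let a ∈ A be left generalized Drazin invertible, i.e. there is an idempotent p ∈ A with ap = pa, ap quasinilpotent, and an element b ∈ A with bp = pb and b(a + p) = e. Then there exists ε > 0 such that for every λ ∈ ℂ with 0 < |λ| < ε, the element a − λe is left invertible in A. -/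
/-!
The idempotent `p` commutes with `a`, so `a - r` splits along `p` and `1 - p`. On the `p` part it
agrees with `a * p - r`, which is invertible as soon as `r ≠ 0` avoids the spectrum of `a * p`. On
the `1 - p` part it agrees with `a + p - r`, a small perturbation of the left invertible element
`a + p`. The two left inverses are glued along `p + (1 - p) = 1`.
-/

open Topology

theorem mul_add_mul_mul_eq_one_of_add_eq_one {S : Type*} [Semiring S] {x p q u v u' v' : S}
    (hpq : p + q = 1) (hpx : p * x = u * p) (hqx : q * x = v * q)
    (hu : u' * u = 1) (hv : v' * v = 1) : (u' * p + v' * q) * x = 1 :=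
  calc (u' * p + v' * q) * x = u' * (p * x) + v' * (q * x) := by
        rw [add_mul, mul_assoc, mul_assoc]
    _ = (u' * u) * p + (v' * v) * q := by rw [hpx, hqx, mul_assoc, mul_assoc]
    _ = 1 := by rw [hu, hv, one_mul, one_mul, hpq]

section Algebra

variable {R A : Type*} [CommRing R] [Ring A] [Algebra R A] {a p : A}

theorem idempotent_mul_sub_smul_one (hp : IsIdempotentElem p) (hap : Commute a p) (r : R) :
    p * (a - r • 1) = (a * p - r • 1) * p := by
  rw [mul_sub, sub_mul, mul_assoc, hp.eq, hap.eq, mul_smul_one, smul_one_mul]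

theorem one_sub_idempotent_mul_sub_smul_one (hp : IsIdempotentElem p) (hap : Commute a p)
    (r : R) : (1 - p) * (a - r • 1) = (a + p - r • 1) * (1 - p) := by
  have hcomm : Commute (1 - p) (a - r • 1) :=
    ((Commute.one_left a).sub_left hap.symm).sub_right ((Commute.one_right _).smul_right r)
  rw [hcomm.eq, add_sub_right_comm, add_mul, hp.mul_one_sub_self, add_zero]

theorem exists_left_inv_sub_smul_one_of_mem_resolventSet {r : R} (hr : r ∈ resolventSet R a) :
    ∃ y, y * (a - r • 1) = 1 := by
  rw [spectrum.mem_resolventSet_iff, IsUnit.sub_iff, Algebra.algebraMap_eq_smul_one] at hr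
  exact hr.exists_left_inv

end Algebra

theorem exists_left_inv_sub_of_norm_mul_lt_one {A : Type*} [NormedRing A] [HasSummableGeomSeries A]
    {b x d : A} (hb : b * x = 1) (hd : ‖b * d‖ < 1) : ∃ y, y * (x - d) = 1 := by
  obtain ⟨c, hc⟩ := (isUnit_one_sub_of_norm_lt_one hd).exists_left_inv
  exact ⟨c * b, by rw [mul_assoc, mul_sub, hb, hc]⟩

section NormedAlgebra

variable {𝕜 A : Type*} [NormedField 𝕜] [NormedRing A] [NormedAlgebra 𝕜 A]

theorem eventually_exists_left_inv_sub_smul_one [HasSummableGeomSeries A] {b x : A}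
    (hb : b * x = 1) : ∀ᶠ r : 𝕜 in 𝓝 0, ∃ y, y * (x - r • 1) = 1 := by
  have hcont : Continuous fun r : 𝕜 ↦ ‖b * r • (1 : A)‖ := by fun_prop
  have hsmall : ∀ᶠ r : 𝕜 in 𝓝 0, ‖b * r • (1 : A)‖ < 1 :=
    hcont.continuousAt.eventually_lt_const (by simp)
  exact hsmall.mono fun r hr ↦ exists_left_inv_sub_of_norm_mul_lt_one hb hr

theorem eventually_mem_resolventSet_of_spectralRadius_eq_zero {x : A}
    (hx : spectralRadius 𝕜 x = 0) : ∀ᶠ r : 𝕜 in 𝓝[≠] 0, r ∈ resolventSet 𝕜 x := by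
  filter_upwards [self_mem_nhdsWithin] with r hr
  exact spectrum.mem_resolventSet_of_spectralRadius_lt (by simpa [hx] using hr)

theorem left_generalized_Drazin_left_invertible_near_zero_general [HasSummableGeomSeries A]
    {a p b : A} (hp : IsIdempotentElem p) (hap : Commute a p)
    (hres : ∀ᶠ r : 𝕜 in 𝓝[≠] 0, r ∈ resolventSet 𝕜 (a * p)) (hb : b * (a + p) = 1) :
    ∀ᶠ r : 𝕜 in 𝓝[≠] 0, ∃ y, y * (a - r • 1) = 1 := by
  filter_upwards [hres, (eventually_exists_left_inv_sub_smul_one hb).filter_mono nhdsWithin_le_nhds]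
    with r hr ⟨v', hv'⟩
  obtain ⟨u', hu'⟩ := exists_left_inv_sub_smul_one_of_mem_resolventSet hr
  exact ⟨u' * p + v' * (1 - p), mul_add_mul_mul_eq_one_of_add_eq_one (add_sub_cancel p 1)
    (idempotent_mul_sub_smul_one hp hap r) (one_sub_idempotent_mul_sub_smul_one hp hap r) hu' hv'⟩

end NormedAlgebra

/-- If `a` is left generalized Drazin invertible in a complex unital Banach algebra `A`
(there is an idempotent `p` commuting with `a`, with `ap` quasinilpotent and `a + p`
left invertible in the commutant of `p`), then `a − λ·1` is left invertible for all
`λ ≠ 0` of sufficiently small modulus. -/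
theorem left_generalized_Drazin_left_invertible_near_zero
    {A : Type*} [NormedRing A] [NormedAlgebra ℂ A] [CompleteSpace A]
    (a p b : A) (hp : p * p = p) (hpa : a * p = p * a)
    (hq : spectralRadius ℂ (a * p) = 0)
    (hbp : b * p = p * b) (hb : b * (a + p) = 1) :
    ∃ ε : ℝ, 0 < ε ∧ ∀ lam : ℂ, lam ≠ 0 → ‖lam‖ < ε →
      ∃ y : A, y * (a - lam • (1 : A)) = 1 := by
  obtain ⟨ε, hε, hball⟩ := Metric.mem_nhdsWithin_iff.mp <|
    left_generalized_Drazin_left_invertible_near_zero_general hp hpa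
      (eventually_mem_resolventSet_of_spectralRadius_eq_zero hq) hb
  exact ⟨ε, hε, fun lam hne hlt ↦ hball ⟨mem_ball_zero_iff.mpr hlt, hne⟩⟩
end

section
/- Let A be a complex unital Banach algebra with unit e and let a ∈ A be right generalized Drazin invertible, i.e. there is an idempotent p ∈ A with ap = pa, ap quasinilpotent, and an element b ∈ A with bp = pb and (a + p)b = e. Then there exists ε > 0 such that for every λ ∈ ℂ with 0 < |λ| < ε, the element a − λe is right invertible in A. -/
/-!
An idempotent `p` commuting with `a` satisfies `p * (a * p) = a * p`, and therefore
`(a - λ) * p = p * (a * p - λ)`. For `λ ≠ 0` the factor `a * p - λ` is invertible, so `p` lies in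
the right ideal generated by `a - λ`; in terms of `∣`, which in a noncommutative ring allows right
multiples only, `a - λ ∣ p`. For small `λ` the element `(a - λ) + p` of this right ideal is a small
perturbation of the right invertible `a + p`, so it is right invertible, and hence so is `a - λ`.
-/

theorem exists_mul_eq_one_of_dvd_of_add_mul_eq_one {R : Type*} [Semiring R] {x p d : R}
    (hxp : x ∣ p) (hd : (x + p) * d = 1) : ∃ y, x * y = 1 := by
  obtain ⟨z, rfl⟩ := hxp
  exact ⟨(1 + z) * d, by rw [← mul_assoc, mul_one_add, hd]⟩

theorem exists_sub_mul_eq_one_of_norm_mul_lt_one {A : Type*} [NormedRing A]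
    [HasSummableGeomSeries A] {x t b : A} (hxb : x * b = 1) (htb : ‖t * b‖ < 1) :
    ∃ y, (x - t) * y = 1 := by
  obtain ⟨u, hu⟩ := (isUnit_one_sub_of_norm_lt_one htb).exists_right_inv
  exact ⟨b * u, by rw [← mul_assoc, sub_mul, hxb, hu]⟩

theorem sub_smul_one_dvd_of_mem_resolventSet {R A : Type*} [CommRing R] [Ring A] [Algebra R A]
    {a p : A} {r : R} (hpa : p * (a * p) = a * p) (hr : r ∈ resolventSet R (a * p)) :
    a - r • (1 : A) ∣ p := by
  obtain ⟨c, hc⟩ := (spectrum.mem_resolventSet_iff.mp hr).exists_right_inv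
  have intertwine : (a - r • (1 : A)) * p = -(p * (algebraMap R A r - a * p)) := by
    rw [sub_mul, smul_one_mul, mul_sub, hpa, ← Algebra.commutes, ← Algebra.smul_def, neg_sub]
  exact ⟨-(p * c), by rw [mul_neg, ← mul_assoc, intertwine, neg_mul, neg_neg, mul_assoc, hc,
    mul_one]⟩

theorem right_generalized_Drazin_right_invertible_near_zero_general
    {𝕜 A : Type*} [NormedField 𝕜] [NormedRing A] [NormedAlgebra 𝕜 A] [HasSummableGeomSeries A]
    {a p b : A} (hpa : p * (a * p) = a * p) (hq : spectralRadius 𝕜 (a * p) = 0)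
    (hb : (a + p) * b = 1) :
    ∃ ε : ℝ, 0 < ε ∧ ∀ lam : 𝕜, lam ≠ 0 → ‖lam‖ < ε →
      ∃ y : A, (a - lam • (1 : A)) * y = 1 := by
  obtain ⟨ε, ε_pos, hε⟩ := exists_pos_mul_lt one_pos ‖b‖
  refine ⟨ε, ε_pos, fun lam lam_ne_zero lam_lt => ?_⟩
  have norm_lt_one : ‖lam • (1 : A) * b‖ < 1 := calc
    ‖lam • (1 : A) * b‖ = ‖b‖ * ‖lam‖ := by rw [smul_one_mul, norm_smul, mul_comm]
    _ ≤ ‖b‖ * ε := by gcongr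
    _ < 1 := hε
  have mem_resolventSet : lam ∈ resolventSet 𝕜 (a * p) :=
    spectrum.mem_resolventSet_of_spectralRadius_lt (by simpa [hq] using lam_ne_zero)
  obtain ⟨d, hd⟩ := exists_sub_mul_eq_one_of_norm_mul_lt_one hb norm_lt_one
  rw [add_sub_right_comm] at hd
  exact exists_mul_eq_one_of_dvd_of_add_mul_eq_one
    (sub_smul_one_dvd_of_mem_resolventSet hpa mem_resolventSet) hd

/-- If `a` is right generalized Drazin invertible in a complex unital Banach algebra `A`
(there is an idempotent `p` commuting with `a`, with `ap` quasinilpotent and `a + p`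
right invertible in the commutant of `p`), then `a − λ·1` is right invertible for all
`λ ≠ 0` of sufficiently small modulus. -/
theorem right_generalized_Drazin_right_invertible_near_zero
    {A : Type*} [NormedRing A] [NormedAlgebra ℂ A] [CompleteSpace A]
    (a p b : A) (hp : p * p = p) (hpa : a * p = p * a)
    (hq : spectralRadius ℂ (a * p) = 0)
    (hbp : b * p = p * b) (hb : (a + p) * b = 1) :
    ∃ ε : ℝ, 0 < ε ∧ ∀ lam : ℂ, lam ≠ 0 → ‖lam‖ < ε →
      ∃ y : A, (a - lam • (1 : A)) * y = 1 :=
  right_generalized_Drazin_right_invertible_near_zero_general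
    (by rw [hpa, ← mul_assoc, hp]) hq hb
end

section
/- Let A be a complex unital Banach algebra with unit e and let a ∈ A. Then a is generalized Drazin invertible (there is an idempotent p ∈ A with ap = pa, ap quasinilpotent, and a + p invertible in A) if and only if a is both left generalized Drazin invertible (there is an idempotent p₁ with ap₁ = p₁a, ap₁ quasinilpotent, and b₁ ∈ A with b₁p₁ = p₁b₁ and b₁(a + p₁) = e) and right generalized Drazin invertible (there is an idempotent p₂ with ap₂ = p₂a, ap₂ quasinilpotent, and b₂ ∈ A with b₂p₂ = p₂b₂ and (a + p₂)b₂ = e). -/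
/-!
Let `p` and `r` be the idempotents witnessing left and right generalized Drazin invertibility of
`a`, and let `b` be a left inverse of `a + p`. The element `z = (1 - p) * r` satisfies
`b * z * (a * r) = z`, hence `b ^ n * z * (a * r) ^ n = z` for all `n`. If `z ≠ 0`, comparing norms
and taking `n`-th roots gives `1 ≤ ρ(b) * ρ(a * r) = 0` by Gelfand's formula, so `z = 0`.
Symmetrically `p * (1 - r) = 0`, so `p = p * r = r`, and `a + p` has inverses on both sides.
-/

open Filter Topology
open scoped ENNReal

section Monoid

variable {M : Type*} [Monoid M] {x y z : M}

theorem pow_mul_mul_pow_eq_of_mul_mul_eq (h : x * z * y = z) (n : ℕ) : x ^ n * z * y ^ n = z := by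
  induction n with
  | zero => simp
  | succ n ih =>
    calc x ^ (n + 1) * z * y ^ (n + 1) = x ^ n * (x * z * y) * y ^ n := by
          simp only [pow_succ x, pow_succ' y, mul_assoc]
      _ = z := by rw [h, ih]

end Monoid

section Ring

variable {R : Type*} [Ring R] {a b c p r : R}

theorem mul_one_sub_mul_mul_eq_of_mul_add_eq_one (hp : IsIdempotentElem p) (hap : Commute a p)
    (hb : b * (a + p) = 1) (hr : IsIdempotentElem r) (har : Commute a r) :
    b * ((1 - p) * r) * (a * r) = (1 - p) * r :=
  calc b * ((1 - p) * r) * (a * r) = b * ((1 - p) * a) * (r * r) := by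
        simp only [mul_assoc, har.left_comm]
    _ = b * ((a + p) * (1 - p)) * r := by
        rw [hr.eq, add_mul, hp.mul_one_sub_self, add_zero,
          ((Commute.one_right a).sub_right hap).eq]
    _ = (1 - p) * r := by rw [← mul_assoc, hb, one_mul]

theorem mul_mul_one_sub_mul_eq_of_add_mul_eq_one (hr : IsIdempotentElem r) (har : Commute a r)
    (hc : (a + r) * c = 1) (hp : IsIdempotentElem p) (hap : Commute a p) :
    a * p * (p * (1 - r)) * c = p * (1 - r) :=
  calc a * p * (p * (1 - r)) * c = p * p * (a * (1 - r)) * c := by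
        simp only [mul_assoc, hap.left_comm]
    _ = p * ((1 - r) * (a + r)) * c := by
        rw [hp.eq, mul_add, hr.one_sub_mul_self, add_zero,
          ((Commute.one_right a).sub_right har).eq]
    _ = p * (1 - r) := by rw [mul_assoc, mul_assoc, hc, mul_one]

end Ring

section BanachAlgebra

theorem spectralRadius_ne_top {𝕜 A : Type*} [NormedField 𝕜] [NormedRing A]
    [NormedAlgebra 𝕜 A] [CompleteSpace A] (x : A) : spectralRadius 𝕜 x ≠ ∞ := by
  refine ne_top_of_le_ne_top ?_ (spectrum.spectralRadius_le_pow_nnnorm_pow_one_div 𝕜 x 0)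
  simp [ENNReal.mul_ne_top]

theorem one_le_nnnorm_mul_nnnorm_of_mul_mul_eq {A : Type*} [NonUnitalNormedRing A] {x y z : A}
    (hz : z ≠ 0) (h : x * z * y = z) : 1 ≤ ‖x‖₊ * ‖y‖₊ := by
  have nnnorm_bound : ‖z‖₊ ≤ ‖x‖₊ * ‖y‖₊ * ‖z‖₊ :=
    calc ‖z‖₊ = ‖x * z * y‖₊ := by rw [h]
      _ ≤ ‖x‖₊ * ‖z‖₊ * ‖y‖₊ := norm_mul₃_le
      _ = ‖x‖₊ * ‖y‖₊ * ‖z‖₊ := mul_right_comm _ _ _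
  exact (le_mul_iff_one_le_left (nnnorm_pos.mpr hz)).mp nnnorm_bound

variable {A : Type*} [NormedRing A] [NormedAlgebra ℂ A] [CompleteSpace A] {a b c p r x y z : A}

theorem one_le_spectralRadius_mul_spectralRadius_of_mul_mul_eq (hz : z ≠ 0) (h : x * z * y = z) :
    1 ≤ spectralRadius ℂ x * spectralRadius ℂ y := by
  have gelfand : Tendsto
      (fun n : ℕ => (‖x ^ n‖₊ : ℝ≥0∞) ^ (1 / n : ℝ) * (‖y ^ n‖₊ : ℝ≥0∞) ^ (1 / n : ℝ)) atTop
      (𝓝 (spectralRadius ℂ x * spectralRadius ℂ y)) :=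
    ENNReal.Tendsto.mul (spectrum.gelfand_formula x) (.inr (spectralRadius_ne_top y))
      (spectrum.gelfand_formula y) (.inr (spectralRadius_ne_top x))
  have one_le (n : ℕ) : (1 : ℝ≥0∞) ≤ ‖x ^ n‖₊ * ‖y ^ n‖₊ :=
    mod_cast one_le_nnnorm_mul_nnnorm_of_mul_mul_eq hz (pow_mul_mul_pow_eq_of_mul_mul_eq h n)
  refine ge_of_tendsto' gelfand fun n => ?_
  rw [← ENNReal.mul_rpow_of_nonneg _ _ (by positivity)]
  exact ENNReal.one_rpow (1 / n : ℝ) ▸ ENNReal.rpow_le_rpow (one_le n) (by positivity)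

theorem eq_zero_of_mul_mul_eq_of_spectralRadius_mul_lt_one (h : x * z * y = z)
    (hxy : spectralRadius ℂ x * spectralRadius ℂ y < 1) : z = 0 :=
  by_contra fun hz =>
    hxy.not_ge (one_le_spectralRadius_mul_spectralRadius_of_mul_mul_eq hz h)

theorem eq_of_mul_add_eq_one_of_add_mul_eq_one
    (hp : IsIdempotentElem p) (hap : Commute a p) (hqp : spectralRadius ℂ (a * p) = 0)
    (hb : b * (a + p) = 1)
    (hr : IsIdempotentElem r) (har : Commute a r) (hqr : spectralRadius ℂ (a * r) = 0)
    (hc : (a + r) * c = 1) : p = r := by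
  have one_sub_mul_eq_zero : (1 - p) * r = 0 :=
    eq_zero_of_mul_mul_eq_of_spectralRadius_mul_lt_one
      (mul_one_sub_mul_mul_eq_of_mul_add_eq_one hp hap hb hr har) (by simp [hqr])
  have mul_one_sub_eq_zero : p * (1 - r) = 0 :=
    eq_zero_of_mul_mul_eq_of_spectralRadius_mul_lt_one
      (mul_mul_one_sub_mul_eq_of_add_mul_eq_one hr har hc hp hap) (by simp [hqp])
  calc p = p * r := by rwa [mul_sub, mul_one, sub_eq_zero] at mul_one_sub_eq_zero
    _ = r := by rwa [sub_mul, one_mul, sub_eq_zero, eq_comm] at one_sub_mul_eq_zero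

end BanachAlgebra

/-- **Generalized Drazin invertibility = left ∧ right generalized Drazin invertibility.**
An element `a` of a complex unital Banach algebra is generalized Drazin invertible if and
only if it is both left generalized Drazin invertible and right generalized Drazin
invertible. -/
theorem generalized_Drazin_iff_left_and_right
    {A : Type*} [NormedRing A] [NormedAlgebra ℂ A] [CompleteSpace A] (a : A) :
    (∃ p : A, p * p = p ∧ a * p = p * a ∧ spectralRadius ℂ (a * p) = 0 ∧ IsUnit (a + p)) ↔
    ((∃ p₁ : A, p₁ * p₁ = p₁ ∧ a * p₁ = p₁ * a ∧ spectralRadius ℂ (a * p₁) = 0 ∧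
        ∃ b₁ : A, b₁ * p₁ = p₁ * b₁ ∧ b₁ * (a + p₁) = 1) ∧
      (∃ p₂ : A, p₂ * p₂ = p₂ ∧ a * p₂ = p₂ * a ∧ spectralRadius ℂ (a * p₂) = 0 ∧
        ∃ b₂ : A, b₂ * p₂ = p₂ * b₂ ∧ (a + p₂) * b₂ = 1)) := by
  constructor
  · rintro ⟨p, hp, hap, hq, u, hu⟩
    have hup : Commute (u : A) p := hu ▸ Commute.add_left hap (Commute.refl p)
    have hinv : (↑u⁻¹ : A) * p = p * ↑u⁻¹ := hup.units_inv_left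
    exact ⟨⟨p, hp, hap, hq, ↑u⁻¹, hinv, hu ▸ u.inv_mul⟩,
      ⟨p, hp, hap, hq, ↑u⁻¹, hinv, hu ▸ u.mul_inv⟩⟩
  · rintro ⟨⟨p, hp, hap, hqp, b, -, hb⟩, ⟨r, hr, har, hqr, c, -, hc⟩⟩
    obtain rfl : p = r := eq_of_mul_add_eq_one_of_add_mul_eq_one hp hap hqp hb hr har hqr hc
    exact ⟨p, hp, hap, hqp, isUnit_iff_exists_and_exists.mpr ⟨⟨c, hc⟩, ⟨b, hb⟩⟩⟩
end

section
/- Let A be a complex unital Banach algebra with unit e and let a ∈ A. Then a is Drazin invertible (there exists b ∈ A with ab = ba, b = ab², and aᵏ = aᵏ⁺¹b for some nonnegative integer k) if and only if a is both left Drazin invertible (there is an idempotent p₁ with ap₁ = p₁a, (ap₁)ⁿ = 0 for some n ≥ 1, and b₁ ∈ A with b₁p₁ = p₁b₁ and b₁(a + p₁) = e) and right Drazin invertible (there is an idempotent p₂ with ap₂ = p₂a, (ap₂)ᵐ = 0 for some m ≥ 1, and b₂ ∈ A with b₂p₂ = p₂b₂ and (a + p₂)b₂ = e). -/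
/-!
Drazin invertibility of `a` means that some idempotent `p` commuting with `a` has `a * p` nilpotent
and `a + p` invertible. In terms of the Drazin inverse `b` one takes `p = 1 - a * b`, and `a + p` is
a unit because it commutes with `b + p` and `(a + p) * (b + p) = a * p + 1`; conversely
`b = (a + p)⁻¹ * (1 - p)`.

Suppose that `p` and `q` are idempotents commuting with `a`, with `a ^ n * q = 0` and `a + p` left
invertible. Since `(a + p) ^ n * (1 - p) = a ^ n * (1 - p)`, the product
`(a + p) ^ n * (1 - p) * q` vanishes, and cancelling `(a + p) ^ n` gives `p * q = q`. Dually
`p * q = p` when `a ^ m * p = 0` and `a + q` is right invertible. Hence a left and a right Drazin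
idempotent of `a` coincide, and `a + p` is then invertible on both sides.
-/

/-- Drazin invertibility of an element of a ring; the witness `b` is its Drazin inverse. -/
def IsDrazinInvertible {A : Type*} [Ring A] (a : A) : Prop :=
  ∃ b : A, a * b = b * a ∧ b = a * (b * b) ∧ ∃ k : ℕ, a ^ k = a ^ (k + 1) * b

/-- Left Drazin invertibility: `a * p` is nilpotent for some idempotent `p` commuting with `a`, and
`a + p` has a left inverse commuting with `p`. -/
def IsLeftDrazinInvertible {A : Type*} [Ring A] (a : A) : Prop :=
  ∃ p : A, p * p = p ∧ a * p = p * a ∧ (∃ n : ℕ, 1 ≤ n ∧ (a * p) ^ n = 0) ∧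
    ∃ b : A, b * p = p * b ∧ b * (a + p) = 1

/-- Right Drazin invertibility: `a * p` is nilpotent for some idempotent `p` commuting with `a`, and
`a + p` has a right inverse commuting with `p`. -/
def IsRightDrazinInvertible {A : Type*} [Ring A] (a : A) : Prop :=
  ∃ p : A, p * p = p ∧ a * p = p * a ∧ (∃ n : ℕ, 1 ≤ n ∧ (a * p) ^ n = 0) ∧
    ∃ b : A, b * p = p * b ∧ (a + p) * b = 1

theorem mul_pow_succ_of_isIdempotentElem {M : Type*} [Monoid M] {a p : M}
    (hp : IsIdempotentElem p) (hap : Commute a p) (n : ℕ) :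
    (a * p) ^ (n + 1) = a ^ (n + 1) * p := by
  rw [hap.mul_pow, hp.pow_succ_eq]

theorem isIdempotentElem_mul_of_eq_mul_mul_self {S : Type*} [Semigroup S] {a b : S}
    (hab : Commute a b) (hb : b = a * (b * b)) : IsIdempotentElem (a * b) :=
  calc a * b * (a * b) = a * (a * (b * b)) := by rw [hab.symm.mul_mul_mul_comm, mul_assoc]
    _ = a * b := by rw [← hb]

theorem isNilpotent_mul_iff_exists_pow_mul_eq_zero {M : Type*} [MonoidWithZero M] {a p : M}
    (hp : IsIdempotentElem p) (hap : Commute a p) :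
    IsNilpotent (a * p) ↔ ∃ n : ℕ, a ^ n * p = 0 := by
  constructor
  · rintro ⟨n, hn⟩
    exact ⟨n + 1, by rw [← mul_pow_succ_of_isIdempotentElem hp hap, pow_succ, hn, zero_mul]⟩
  · rintro ⟨n, hn⟩
    exact ⟨n + 1, by
      rw [mul_pow_succ_of_isIdempotentElem hp hap, pow_succ', mul_assoc, hn, mul_zero]⟩

section Ring

variable {A : Type*} [Ring A] {a b p q : A}

theorem add_mul_one_sub_of_isIdempotentElem (hp : IsIdempotentElem p) :
    (a + p) * (1 - p) = a * (1 - p) := by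
  rw [add_mul, hp.mul_one_sub_self, add_zero]

theorem add_pow_mul_one_sub_of_isIdempotentElem (hp : IsIdempotentElem p) (hap : Commute a p)
    (n : ℕ) : (a + p) ^ n * (1 - p) = a ^ n * (1 - p) := by
  have hcomm : Commute a (1 - p) := (Commute.one_right a).sub_right hap
  induction n with
  | zero => rw [pow_zero, pow_zero]
  | succ n ih =>
    calc (a + p) ^ (n + 1) * (1 - p)
        = (a + p) ^ n * (1 - p) * a := by
          rw [pow_succ, mul_assoc, add_mul_one_sub_of_isIdempotentElem hp, hcomm.eq, mul_assoc]
      _ = a ^ (n + 1) * (1 - p) := by rw [ih, mul_assoc, ← hcomm.eq, ← mul_assoc, ← pow_succ]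

theorem mul_eq_right_of_isLeftRegular_add (hp : IsIdempotentElem p) (hap : Commute a p)
    (hreg : IsLeftRegular (a + p)) {n : ℕ} (hq : a ^ n * q = 0) : p * q = q := by
  have hcomm : Commute (a ^ n) (1 - p) := ((Commute.one_right a).sub_right hap).pow_left n
  have hzero : (a + p) ^ n * ((1 - p) * q) = 0 := by
    rw [← mul_assoc, add_pow_mul_one_sub_of_isIdempotentElem hp hap, hcomm.eq, mul_assoc, hq,
      mul_zero]
  have hcancel : (1 - p) * q = 0 := (hreg.pow n).mul_left_eq_zero_iff.mp hzero
  rw [sub_mul, one_mul, sub_eq_zero] at hcancel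
  exact hcancel.symm

theorem mul_eq_left_of_isRightRegular_add (hp : IsIdempotentElem p) (hap : Commute a p)
    (hreg : IsRightRegular (a + p)) {n : ℕ} (hq : q * a ^ n = 0) : q * p = q :=
  MulOpposite.op_injective <|
    mul_eq_right_of_isLeftRegular_add (a := MulOpposite.op a) (n := n)
      (congrArg MulOpposite.op hp) hap.op
      (isLeftRegular_op.mpr hreg) (congrArg MulOpposite.op hq)

theorem eq_of_isLeftRegular_add_of_isRightRegular_add
    (hp : IsIdempotentElem p) (hap : Commute a p) (hpnil : IsNilpotent (a * p))
    (hpreg : IsLeftRegular (a + p))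
    (hq : IsIdempotentElem q) (haq : Commute a q) (hqnil : IsNilpotent (a * q))
    (hqreg : IsRightRegular (a + q)) : p = q := by
  obtain ⟨n, hn⟩ := (isNilpotent_mul_iff_exists_pow_mul_eq_zero hp hap).mp hpnil
  obtain ⟨m, hm⟩ := (isNilpotent_mul_iff_exists_pow_mul_eq_zero hq haq).mp hqnil
  rw [(hap.pow_left n).eq] at hn
  calc p = p * q := (mul_eq_left_of_isRightRegular_add hq haq hqreg hn).symm
    _ = q := mul_eq_right_of_isLeftRegular_add hp hap hpreg hm

theorem isUnit_add_one_sub_mul (hab : Commute a b) (hb : b = a * (b * b))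
    (hnil : IsNilpotent (a * (1 - a * b))) : IsUnit (a + (1 - a * b)) := by
  have hidem : IsIdempotentElem (1 - a * b) :=
    (isIdempotentElem_mul_of_eq_mul_mul_self hab hb).one_sub
  have hpb : (1 - a * b) * b = 0 := by rw [sub_mul, one_mul, mul_assoc, ← hb, sub_self]
  have hprod : (a + (1 - a * b)) * (b + (1 - a * b)) = a * (1 - a * b) + 1 := by
    rw [add_mul, mul_add, mul_add, hpb, hidem.eq]
    abel
  have hcomm : Commute (a + (1 - a * b)) (b + (1 - a * b)) := by
    have hap : Commute a (1 - a * b) :=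
      (Commute.one_right a).sub_right ((Commute.refl a).mul_right hab)
    have hbp : Commute b (1 - a * b) :=
      (Commute.one_right b).sub_right (hab.symm.mul_right (Commute.refl b))
    exact (hab.add_right hap).add_left (hbp.symm.add_right (Commute.refl _))
  have hunit : IsUnit ((a + (1 - a * b)) * (b + (1 - a * b))) := hprod ▸ hnil.isUnit_add_one
  exact (hcomm.isUnit_mul_iff.mp hunit).1

theorem isDrazinInvertible_of_isUnit_add (hp : IsIdempotentElem p) (hap : Commute a p)
    (hnil : IsNilpotent (a * p)) (hunit : IsUnit (a + p)) : IsDrazinInvertible a := by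
  obtain ⟨n, hn⟩ := (isNilpotent_mul_iff_exists_pow_mul_eq_zero hp hap).mp hnil
  obtain ⟨u, hu⟩ := hunit
  have hau : Commute a ↑u⁻¹ :=
    (hu ▸ (Commute.refl a).add_right hap : Commute a u).units_inv_right
  have haq : Commute a (1 - p) := (Commute.one_right a).sub_right hap
  have hinv : a * (↑u⁻¹ * (1 - p)) = 1 - p := by
    rw [← mul_assoc, hau.eq, mul_assoc, ← add_mul_one_sub_of_isIdempotentElem hp, ← hu,
      Units.inv_mul_cancel_left]
  have hpu : Commute p ↑u⁻¹ :=
    (hu ▸ hap.symm.add_right (Commute.refl p) : Commute p u).units_inv_right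
  have huq : Commute (↑u⁻¹ : A) (1 - p) := (Commute.one_right _).sub_right hpu.symm
  refine ⟨(↑u⁻¹ : A) * (1 - p), hau.mul_right haq, ?_, n, ?_⟩
  · rw [← mul_assoc a, hinv, huq.eq, ← mul_assoc, hp.one_sub.eq]
  · rw [pow_succ, mul_assoc, hinv, mul_sub, mul_one, hn, sub_zero]

theorem isDrazinInvertible_iff_exists_isUnit_add :
    IsDrazinInvertible a ↔
      ∃ p : A, IsIdempotentElem p ∧ Commute a p ∧ IsNilpotent (a * p) ∧ IsUnit (a + p) := by
  constructor
  · rintro ⟨b, hab, hb, k, hk⟩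
    have hidem : IsIdempotentElem (a * b) := isIdempotentElem_mul_of_eq_mul_mul_self hab hb
    have hcomm : Commute a (1 - a * b) :=
      (Commute.one_right a).sub_right ((Commute.refl a).mul_right hab)
    have hnil : IsNilpotent (a * (1 - a * b)) :=
      (isNilpotent_mul_iff_exists_pow_mul_eq_zero hidem.one_sub hcomm).mpr
        ⟨k, by rw [mul_sub, mul_one, ← mul_assoc, ← pow_succ, ← hk, sub_self]⟩
    exact ⟨1 - a * b, hidem.one_sub, hcomm, hnil, isUnit_add_one_sub_mul hab hb hnil⟩
  · rintro ⟨p, hp, hap, hnil, hunit⟩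
    exact isDrazinInvertible_of_isUnit_add hp hap hnil hunit

end Ring

theorem Drazin_iff_left_and_right_Drazin_general {A : Type*} [Ring A] (a : A) :
    IsDrazinInvertible a ↔ IsLeftDrazinInvertible a ∧ IsRightDrazinInvertible a := by
  rw [isDrazinInvertible_iff_exists_isUnit_add]
  constructor
  · rintro ⟨p, hp, hap, ⟨n, hn⟩, u, hu⟩
    have hnil : ∃ n : ℕ, 1 ≤ n ∧ (a * p) ^ n = 0 :=
      ⟨n + 1, n.succ_pos, by rw [pow_succ, hn, zero_mul]⟩
    have hup : Commute ↑u⁻¹ p :=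
      (hu ▸ hap.add_left (Commute.refl p) : Commute (u : A) p).units_inv_left
    exact ⟨⟨p, hp, hap, hnil, ↑u⁻¹, hup, hu ▸ u.inv_mul⟩,
      ⟨p, hp, hap, hnil, ↑u⁻¹, hup, hu ▸ u.mul_inv⟩⟩
  · rintro ⟨⟨p, hp, hap, ⟨n, -, hn⟩, b, -, hb⟩, ⟨q, hq, haq, ⟨m, -, hm⟩, c, -, hc⟩⟩
    obtain rfl : p = q := eq_of_isLeftRegular_add_of_isRightRegular_add
      hp hap ⟨n, hn⟩ (isLeftRegular_of_mul_eq_one hb)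
      hq haq ⟨m, hm⟩ (isRightRegular_of_mul_eq_one hc)
    exact ⟨p, hp, hap, ⟨n, hn⟩, isUnit_iff_exists_and_exists.mpr ⟨⟨c, hc⟩, ⟨b, hb⟩⟩⟩

/-- **Drazin invertibility = left ∧ right Drazin invertibility.**
An element `a` of a complex unital Banach algebra is Drazin invertible if and only if it
is both left Drazin invertible and right Drazin invertible. -/
theorem Drazin_iff_left_and_right_Drazin
    {A : Type*} [NormedRing A] [NormedAlgebra ℂ A] [CompleteSpace A] (a : A) :
    (∃ b : A, a * b = b * a ∧ b = a * (b * b) ∧ ∃ k : ℕ, a ^ k = a ^ (k + 1) * b) ↔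
    ((∃ p₁ : A, p₁ * p₁ = p₁ ∧ a * p₁ = p₁ * a ∧ (∃ n : ℕ, 1 ≤ n ∧ (a * p₁) ^ n = 0) ∧
        ∃ b₁ : A, b₁ * p₁ = p₁ * b₁ ∧ b₁ * (a + p₁) = 1) ∧
      (∃ p₂ : A, p₂ * p₂ = p₂ ∧ a * p₂ = p₂ * a ∧ (∃ m : ℕ, 1 ≤ m ∧ (a * p₂) ^ m = 0) ∧
        ∃ b₂ : A, b₂ * p₂ = p₂ * b₂ ∧ (a + p₂) * b₂ = 1)) :=
  Drazin_iff_left_and_right_Drazin_general a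
end
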